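/- Let (X,d) be a proper geodesic metric space, L : [0,∞) → [0,∞) increasing, convex, superlinear with L(0)=0, H its Legendre transform, and g : X → ℝ Lipschitz. Then for every x ∈ X and every t > 0, liminf_{s → 0⁺} (Q_{t+s} g(x) − Q_t g(x))/s ≥ −H(|∇⁻ Q_t g|(x)), where |∇⁻ Q_t g|(x) is the metric subgradient of y ↦ Q_t g(y) at x. -/

import Mathlib

open Metric Filter NNReal Topology

/-- Hopf–Lax (infimum-convolution) semigroup, with `Q_0 g = g`. -/
noncomputable def hopfLaxQ {X : Type*} [MetricSpace X] (L : ℝ → ℝ) (g : X → ℝ)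
    (t : ℝ) (x : X) : ℝ :=
  if t = 0 then g x else ⨅ y : X, (t * L (dist x y / t) + g y)

/-- The (one-dimensional) Legendre transform `H(w) = sup_{v ≥ 0} (w·v − L(v))`. -/
noncomputable def legendreH (L : ℝ → ℝ) (w : ℝ) : ℝ :=
  sSup ((fun v => w * v - L v) '' Set.Ici 0)

/-- The metric subgradient `|∇⁻ f|(x₀) = limsup_{x → x₀} [f(x₀) − f(x)]₊ / d(x,x₀)`. -/
noncomputable def metricSubgradient {X : Type*} [MetricSpace X] (f : X → ℝ) (x₀ : X) : ℝ :=
  limsup (fun x => max (f x₀ - f x) 0 / dist x x₀) (𝓝[≠] x₀)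

theorem hl_super {L : ℝ → ℝ} (h : Tendsto (fun u => L u / u) atTop atTop) (K : ℝ) :
    ∃ R : ℝ, 0 < R ∧ ∀ v, R ≤ v → K * v ≤ L v := by
  obtain ⟨R, hR⟩ := (tendsto_atTop.1 h K).exists_forall_of_atTop
  refine ⟨max R 1, by positivity, fun v hv => ?_⟩
  have h1 : 0 < v := lt_of_lt_of_le (by positivity) hv
  have h2 := hR v (le_trans (le_max_left _ _) hv)
  exact (le_div_iff₀ h1).1 h2

theorem hl_bdd {X : Type*} [MetricSpace X] {L : ℝ → ℝ}
    (hLnonneg : ∀ u, 0 ≤ u → 0 ≤ L u)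
    (hLsuper : Tendsto (fun u => L u / u) atTop atTop)
    {g : X → ℝ} {K : ℝ≥0} (hg : LipschitzWith K g) (x : X) {t : ℝ} (ht : 0 < t) :
    BddBelow (Set.range fun y : X => t * L (dist x y / t) + g y) := by
  obtain ⟨R, hR, h⟩ := hl_super hLsuper K
  refine ⟨g x - t * (K * R), ?_⟩
  rintro _ ⟨y, rfl⟩
  have hK : (0:ℝ) ≤ K := K.2
  have hd : 0 ≤ dist x y / t := by positivity
  have h1 : K * (dist x y / t) - K * R ≤ L (dist x y / t) := by
    rcases le_total R (dist x y / t) with h2 | h2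
    · have := h _ h2
      have : 0 ≤ K * R := by positivity
      linarith
    · have := hLnonneg _ hd
      have := mul_le_mul_of_nonneg_left h2 hK
      linarith
  have h2 := mul_le_mul_of_nonneg_left h1 ht.le
  have h3 : t * (K * (dist x y / t) - K * R) = K * dist x y - t * (K * R) := by
    field_simp
  have h4 := hg.dist_le_mul x y
  rw [Real.dist_eq] at h4
  have h5 := le_abs_self (g x - g y)
  show _ ≤ t * L (dist x y / t) + g y
  linarith

theorem hl_le {X : Type*} [MetricSpace X] {L : ℝ → ℝ}
    (hLnonneg : ∀ u, 0 ≤ u → 0 ≤ L u)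
    (hLsuper : Tendsto (fun u => L u / u) atTop atTop)
    {g : X → ℝ} {K : ℝ≥0} (hg : LipschitzWith K g) (x y : X) {t : ℝ} (ht : 0 < t) :
    hopfLaxQ L g t x ≤ t * L (dist x y / t) + g y := by
  rw [hopfLaxQ, if_neg ht.ne']
  exact ciInf_le (hl_bdd hLnonneg hLsuper hg x ht) y

theorem hl_ge {X : Type*} [MetricSpace X] [Nonempty X] {L : ℝ → ℝ}
    {g : X → ℝ} (x : X) {t a : ℝ} (ht : 0 < t)
    (h : ∀ y, a ≤ t * L (dist x y / t) + g y) : a ≤ hopfLaxQ L g t x := by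
  rw [hopfLaxQ, if_neg ht.ne']
  exact le_ciInf h

/-- For every `x ∈ X` and `t > 0`,
`liminf_{s → 0⁺} (Q_{t+s} g(x) − Q_t g(x))/s ≥ −H(|∇⁻ Q_t g|(x))`. -/
theorem hopfLax_liminf_lower_bound
    {X : Type*} [MetricSpace X] [ProperSpace X] [Nonempty X]
    (hgeo : ∀ x y : X, ∀ τ : ℝ, 0 ≤ τ → τ ≤ 1 →
      ∃ z : X, dist x z = τ * dist x y ∧ dist z y = (1 - τ) * dist x y)
    (L : ℝ → ℝ) (hL0 : L 0 = 0)
    (hLnonneg : ∀ u, 0 ≤ u → 0 ≤ L u)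
    (hLmono : MonotoneOn L (Set.Ici 0))
    (hLconv : ConvexOn ℝ (Set.Ici 0) L)
    (hLsuper : Tendsto (fun u => L u / u) atTop atTop)
    (g : X → ℝ) (hg : ∃ K : ℝ≥0, LipschitzWith K g)
    (x : X) (t : ℝ) (ht : 0 < t) :
    -legendreH L (metricSubgradient (fun y => hopfLaxQ L g t y) x) ≤
      liminf (fun s => (hopfLaxQ L g (t + s) x - hopfLaxQ L g t x) / s) (𝓝[>] (0:ℝ)) := by
  obtain ⟨K, hg⟩ := hg
  have hK : (0:ℝ) ≤ K := K.2
  set f : X → ℝ := fun y => hopfLaxQ L g t y with hf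
  -- Lipschitz bound
  have hlip : ∀ a b : X, f a - f b ≤ K * dist a b := by
    intro a b
    suffices f a - K * dist a b ≤ f b by linarith
    refine hl_ge b ht fun y => ?_
    obtain ⟨z, hz1, hz2⟩ : ∃ z, dist a z ≤ dist b y ∧ dist z y ≤ dist a b := by
      rcases le_or_gt (dist a y) (dist b y) with h | h
      · exact ⟨y, h, by simp⟩
      · have hp : 0 < dist a y := lt_of_le_of_lt dist_nonneg h
        obtain ⟨z, h1, h2⟩ := hgeo a y (dist b y / dist a y) (by positivity)
          ((div_le_one hp).2 h.le)
        refine ⟨z, ?_, ?_⟩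
        · rw [h1, div_mul_cancel₀ _ hp.ne']
        · rw [h2, sub_mul, div_mul_cancel₀ _ hp.ne']
          have := dist_triangle a b y
          linarith
    have h1 : f a ≤ t * L (dist a z / t) + g z := hl_le hLnonneg hLsuper hg a z ht
    have h2 : L (dist a z / t) ≤ L (dist b y / t) :=
      hLmono (Set.mem_Ici.2 (by positivity)) (Set.mem_Ici.2 (by positivity)) (by gcongr)
    have h3 := hg.dist_le_mul z y
    rw [Real.dist_eq] at h3
    have h4 := le_abs_self (g z - g y)
    have h5 := mul_le_mul_of_nonneg_left hz2 hK
    have h6 := mul_le_mul_of_nonneg_left h2 ht.le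
    linarith
  set m := metricSubgradient f x with hm
  have hHb : BddAbove ((fun v => m * v - L v) '' Set.Ici 0) := by
    obtain ⟨R, hR, h⟩ := hl_super hLsuper m
    refine ⟨|m| * R, ?_⟩
    rintro _ ⟨v, hv, rfl⟩
    have hv : 0 ≤ v := hv
    have h0 : 0 ≤ |m| * R := by positivity
    show m * v - L v ≤ _
    rcases le_total R v with h2 | h2
    · have := h _ h2
      linarith
    · have := hLnonneg _ hv
      have h3 := mul_le_mul_of_nonneg_left h2 (abs_nonneg m)
      have h4 := mul_le_mul_of_nonneg_right (le_abs_self m) hv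
      linarith
  have hH : ∀ v, 0 ≤ v → m * v - L v ≤ legendreH L m := fun v hv =>
    le_csSup hHb ⟨v, hv, rfl⟩
  have hH0 : 0 ≤ legendreH L m := by simpa [hL0] using hH 0 le_rfl
  -- upper bound for the difference quotient
  have hcob : IsCoboundedUnder (· ≥ ·) (𝓝[>] (0:ℝ))
      (fun s => (hopfLaxQ L g (t + s) x - hopfLaxQ L g t x) / s) := by
    refine IsBoundedUnder.isCoboundedUnder_ge ⟨0, ?_⟩
    rw [eventually_map]
    filter_upwards [self_mem_nhdsWithin] with s hs
    have hs : 0 < s := hs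
    have hts : 0 < t + s := by positivity
    refine div_nonpos_of_nonpos_of_nonneg (sub_nonpos.2 ?_) hs.le
    refine hl_ge x ht fun y => ?_
    refine (hl_le hLnonneg hLsuper hg x y hts).trans ?_
    have hc := hLconv.2 (show dist x y / t ∈ Set.Ici 0 from Set.mem_Ici.2 (by positivity))
      (show (0:ℝ) ∈ Set.Ici 0 from Set.mem_Ici.2 le_rfl)
      (show 0 ≤ t / (t + s) by positivity) (show 0 ≤ s / (t + s) by positivity)
      (by field_simp)
    simp only [smul_eq_mul, mul_zero, add_zero, hL0] at hc
    have h1 : t / (t + s) * (dist x y / t) = dist x y / (t + s) := by field_simp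
    rw [h1] at hc
    have h2 := mul_le_mul_of_nonneg_left hc hts.le
    have h3 : (t + s) * (t / (t + s) * L (dist x y / t)) = t * L (dist x y / t) := by
      field_simp
    linarith
  obtain ⟨R, hR, hRL⟩ := hl_super hLsuper K
  refine le_of_forall_pos_le_add fun ε hε => ?_
  rw [← sub_le_iff_le_add]
  refine le_liminf_of_le hcob ?_
  -- local estimate
  have hbd : IsBoundedUnder (· ≤ ·) (𝓝[≠] x) (fun z => max (f x - f z) 0 / dist z x) := by
    refine ⟨K, ?_⟩
    rw [eventually_map]
    filter_upwards [self_mem_nhdsWithin] with z hz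
    have hp : 0 < dist z x := dist_pos.2 hz
    rw [div_le_iff₀ hp]
    refine max_le ?_ (by positivity)
    rw [dist_comm]
    exact hlip x z
  have hev := eventually_lt_of_limsup_lt (b := m + ε / R)
    (show limsup (fun z => max (f x - f z) 0 / dist z x) (𝓝[≠] x) < m + ε / R from
      lt_add_of_pos_right m (by positivity)) hbd
  rw [eventually_nhdsWithin_iff, Metric.eventually_nhds_iff] at hev
  obtain ⟨δ, hδ, hloc⟩ := hev
  have hsmall : ∀ᶠ s in 𝓝[>] (0:ℝ), s < δ / R :=
    nhdsWithin_le_nhds (Iio_mem_nhds (by positivity))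
  filter_upwards [hsmall, self_mem_nhdsWithin] with s hsδ hs
  have hs : 0 < s := hs
  have hts : 0 < t + s := by positivity
  rw [le_div_iff₀ hs]
  suffices f x + (-legendreH L m - ε) * s ≤ hopfLaxQ L g (t + s) x by
    have h0 : f x = hopfLaxQ L g t x := rfl
    linarith
  refine hl_ge x hts fun w => ?_
  obtain ⟨z, hz1, hz2⟩ := hgeo x w (s / (t + s)) (by positivity)
    ((div_le_one hts).2 (by linarith))
  set v := dist x w / (t + s) with hv
  have hv0 : 0 ≤ v := by positivity
  have e1 : dist x z = s * v := by rw [hz1, hv]; ring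
  have e2 : dist z w / t = v := by rw [hz2, hv]; field_simp; ring
  have h1 : f z ≤ t * L (dist z w / t) + g w := hl_le hLnonneg hLsuper hg z w ht
  rw [e2] at h1
  suffices f x + (-legendreH L m - ε) * s ≤ s * L v + f z by linarith
  rcases le_or_gt R v with h | h
  · have h2 := hlip x z
    rw [e1] at h2
    have h3 := mul_le_mul_of_nonneg_left (hRL v h) hs.le
    have h4 : 0 ≤ (legendreH L m + ε) * s := by positivity
    linarith
  · have h2 : f x - f z ≤ (m + ε / R) * (s * v) := by
      by_cases hzx : z = x
      · subst hzx
        rw [dist_self] at e1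
        rw [← e1]; simp
      · have hp : 0 < dist z x := dist_pos.2 hzx
        have hlt : dist z x < δ := by
          rw [dist_comm, e1]
          calc s * v ≤ s * R := by gcongr
            _ < δ := (lt_div_iff₀ hR).1 hsδ
        have h3 := hloc hlt hzx
        rw [div_lt_iff₀ hp, dist_comm, e1] at h3
        exact (le_max_left _ _).trans h3.le
    have h3 : ε / R * v ≤ ε := by
      calc ε / R * v ≤ ε / R * R := by gcongr
        _ = ε := by field_simp
    have h4 := mul_le_mul_of_nonneg_left (hH v hv0) hs.le
    have h5 := mul_le_mul_of_nonneg_left h3 hs.le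
    linarith
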